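/- Let p, q ∈ ℂ and let b ∈ ℂ be any root of the cubic equation −p·b³ − 4q·b² + p² = 0. Let z₁, z₂, z₃, z₄ be the roots with multiplicity of X⁴ + pX + q over ℂ. Then the polynomial T(Y) = ∏ᵢ₌₁⁴ (Y + zᵢ² + b·zᵢ) has zero coefficient of Y³ and zero coefficient of Y¹; that is, T(Y) = Y⁴ + c₂Y² + c₀ for some c₂, c₀ ∈ ℂ, a quadratic in Y². In particular, the second and fourth terms of the quartic X⁴ + pX + q can be removed by a quadratic Tschirnhaus transformation whose parameter is found by solving only a cubic equation. -/

import Mathlib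

open Polynomial

/-!
Let `f = ∏ (X - zᵢ)` and let `r`, `r'` be the roots of `z² + bz + a + Y`. Then
`Y + zᵢ² + bzᵢ + a = (r - zᵢ)(r' - zᵢ)`, so the transform is `T(Y) = f(r) f(r')`. To avoid adjoining
`r`, take `r` itself as the indeterminate: `r' = -r - b` and `Y = -(r² + br + a)`, and this
substitution is injective on polynomials. For `f = X⁴ + pX + q` the product is symmetric in `r` and
`r'`; written in terms of `r + r' = -b` and `rr' = Y + a`, it is a quartic in `Y + a` without cubic
term, whose linear coefficient is `-pb³ - 4qb² + p²`.
-/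

section

variable {R : Type*} [CommRing R]

/-- The Tschirnhaus transform of `∏ (X - zᵢ)` by the subsidiary equation `z² + bz + a + y = 0`. The
polynomial is represented by the multiset of its roots `zᵢ`, so that the notion makes sense over any
commutative ring. -/
noncomputable def tschirnhausTransform (b a : R) (s : Multiset R) : R[X] :=
  (s.map fun z ↦ X + C (z ^ 2 + b * z + a)).prod

theorem comp_left_injective {g : R[X]} (hdeg : g.natDegree ≠ 0)
    (hlead : g.leadingCoeff ∈ nonZeroDivisors R) : Function.Injective fun f : R[X] ↦ f.comp g :=
  transcendental_iff_injective.mp (g.transcendental hdeg hlead)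

theorem comp_neg_quadratic_injective (b a : R) :
    Function.Injective fun f : R[X] ↦ f.comp (-(X ^ 2 + C b * X + C a)) := by
  nontriviality R
  have hdeg : (X ^ 2 + C b * X + C a).natDegree = 2 := by compute_degree!
  have hmonic : (X ^ 2 + C b * X + C a).Monic := by monicity!
  apply comp_left_injective
  · rw [natDegree_neg, hdeg]
    exact two_ne_zero
  · rw [leadingCoeff_neg, hmonic.leadingCoeff]
    exact isUnit_one.neg.mem_nonZeroDivisors

theorem tschirnhausTransform_comp (b a : R) (s : Multiset R) :
    (tschirnhausTransform b a s).comp (-(X ^ 2 + C b * X + C a)) =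
      (s.map fun z ↦ X - C z).prod * ((s.map fun z ↦ X - C z).prod).comp (-X - C b) := by
  have hfactor (z : R) : (X + C (z ^ 2 + b * z + a)).comp (-(X ^ 2 + C b * X + C a)) =
      (X - C z) * (X - C z).comp (-X - C b) := by
    simp only [add_comp, sub_comp, X_comp, C_comp]
    simp only [map_add, map_mul, map_pow]
    ring
  simp only [tschirnhausTransform, multiset_prod_comp, Multiset.map_map, Function.comp_apply,
    hfactor, Multiset.prod_map_mul]

theorem tschirnhausTransform_eq_of_prod_eq_X_pow_four_add {p q : R} {s : Multiset R}
    (hs : (s.map fun z ↦ X - C z).prod = X ^ 4 + C p * X + C q) (b a : R) :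
    tschirnhausTransform b a s =
      (X + C a) ^ 4 + C (3 * p * b + 2 * q) * (X + C a) ^ 2 +
        C (-p * b ^ 3 - 4 * q * b ^ 2 + p ^ 2) * (X + C a) + C (q * (b ^ 4 - p * b + q)) := by
  apply comp_neg_quadratic_injective b a
  simp only [tschirnhausTransform_comp, hs, add_comp, mul_comp, pow_comp, X_comp, C_comp]
  simp only [map_add, map_sub, map_mul, map_neg, map_pow, map_ofNat]
  ring

theorem bring_quartic_remove_second_fourth_general {p q b : R}
    (hb : -p * b ^ 3 - 4 * q * b ^ 2 + p ^ 2 = 0) {s : Multiset R}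
    (hs : (s.map fun z ↦ X - C z).prod = X ^ 4 + C p * X + C q) :
    (tschirnhausTransform b 0 s).coeff 3 = 0 ∧ (tschirnhausTransform b 0 s).coeff 1 = 0 ∧
      ∃ c₂ c₀ : R, tschirnhausTransform b 0 s = X ^ 4 + C c₂ * X ^ 2 + C c₀ := by
  obtain ⟨c₂, c₀, hT⟩ :
      ∃ c₂ c₀ : R, tschirnhausTransform b 0 s = X ^ 4 + C c₂ * X ^ 2 + C c₀ := by
    refine ⟨3 * p * b + 2 * q, q * (b ^ 4 - p * b + q), ?_⟩
    simpa only [hb, map_zero, zero_mul, add_zero] using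
      tschirnhausTransform_eq_of_prod_eq_X_pow_four_add hs b 0
  exact ⟨by simp [hT, coeff_X_pow], by simp [hT, coeff_X_pow], c₂, c₀, hT⟩

end

/-- Bring §VII: if `b` is a root of the cubic `-pb³ - 4qb² + p² = 0`, then
the quadratic Tschirnhaus transform `T(Y) = ∏ᵢ (Y + zᵢ² + b·zᵢ)` of the
quartic `X⁴ + pX + q` loses its second and fourth terms, becoming a
quadratic in `Y²`: `T(Y) = Y⁴ + c₂Y² + c₀`. -/
theorem bring_quartic_remove_second_fourth (p q b : ℂ)
    (hb : -p * b ^ 3 - 4 * q * b ^ 2 + p ^ 2 = 0)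
    (z₁ z₂ z₃ z₄ : ℂ)
    (hroots : (X ^ 4 + C p * X + C q).roots = {z₁, z₂, z₃, z₄}) :
    ((X + C (z₁ ^ 2 + b * z₁)) * (X + C (z₂ ^ 2 + b * z₂)) *
        (X + C (z₃ ^ 2 + b * z₃)) * (X + C (z₄ ^ 2 + b * z₄))).coeff 3 = 0 ∧
    ((X + C (z₁ ^ 2 + b * z₁)) * (X + C (z₂ ^ 2 + b * z₂)) *
        (X + C (z₃ ^ 2 + b * z₃)) * (X + C (z₄ ^ 2 + b * z₄))).coeff 1 = 0 ∧
    ∃ c₂ c₀ : ℂ,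
      (X + C (z₁ ^ 2 + b * z₁)) * (X + C (z₂ ^ 2 + b * z₂)) *
        (X + C (z₃ ^ 2 + b * z₃)) * (X + C (z₄ ^ 2 + b * z₄)) =
      X ^ 4 + C c₂ * X ^ 2 + C c₀ := by
  have hprod := (IsAlgClosed.splits (X ^ 4 + C p * X + C q)).eq_prod_roots_of_monic (by monicity!)
  simpa [tschirnhausTransform, hroots, mul_assoc] using
    bring_quartic_remove_second_fourth_general hb hprod.symm
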